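/- A finitely presented group has finitely generated second integral homology group H₂(G;ℤ). -/

import Mathlib

open CategoryTheory AlgebraicTopology

/-- The `n`-th integral homology of a group `G`: the homology of the alternating face
map complex of the free `ℤ`-module on the nerve of `G` (i.e. the simplicial homology
of the classifying space of `G`). -/
noncomputable def groupHomologyZ (n : ℕ) (G : Type) [Group G] : ModuleCat ℤ :=
  (HomologicalComplex.homologyFunctor (ModuleCat ℤ) (ComplexShape.down ℕ) n).obj
    ((alternatingFaceMapComplex (ModuleCat ℤ)).obj
      (((SimplicialObject.whiskering _ _).obj (ModuleCat.free ℤ)).obj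
        (CategoryTheory.nerve (CategoryTheory.SingleObj G))))

/-- A group is finitely presented if it is isomorphic to a presented group with
finitely many generators and finitely many relations. -/
def IsFinitelyPresentedGroup (G : Type) [Group G] : Prop :=
  ∃ (n : ℕ) (rels : Set (FreeGroup (Fin n))),
    rels.Finite ∧ Nonempty (G ≃* PresentedGroup rels)

/-!
The group `H₂(G)` embeds into the chains modulo boundaries `C₂ / B₂` of the classifying space. The
bar symbols `[x|y]` satisfy the `2`-cocycle identity there, because `∂[x|y|z] = 0` modulo `B₂`, so
they classify a central extension `E` of `G` by `C₂ / B₂`. If `G = F / ⟨⟨r₁, …, rₘ⟩⟩` with `F` free,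
then `F → G` lifts to a homomorphism `F → E`. The images of the relators are central, and `E` splits
modulo the subgroup they generate. Hence there are a finitely generated submodule `N` of `C₂ / B₂`
and a function `t` on `G` with `[x|y] ≡ t x - t (x * y) + t y` modulo `N`. The right-hand side is
the value of `t` on `∂[x|y]`, so the projection of `C₂ / B₂` onto its quotient by `N` factors
through `∂` and kills cycles. Therefore `H₂(G)` lies in `N`, and it is finitely generated because
the coefficient ring is Noetherian.
-/

universe u v

section CentralExtensions

variable {F E G : Type*} [Group F] [Group E] [Group G]

theorem map_normalClosure_le_closure_image {φ : F →* E} {rels : Set F}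
    (h : φ '' rels ⊆ Subgroup.center E) :
    (Subgroup.normalClosure rels).map φ ≤ Subgroup.closure (φ '' rels) := by
  have hle : Subgroup.closure (φ '' rels) ≤ Subgroup.center E := (Subgroup.closure_le _).2 h
  have hnormal : (Subgroup.closure (φ '' rels)).Normal := ⟨fun a ha g ↦ by
    rwa [Subgroup.mem_center_iff.1 (hle ha) g, mul_inv_cancel_right]⟩
  exact (Subgroup.map_normalClosure_le _ _).trans
    (Subgroup.normalClosure_le_normal Subgroup.subset_closure)

theorem exists_section_mul_mul_inv_mem_closure {φ : F →* E} {p : E →* G}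
    (hsurj : Function.Surjective (p.comp φ)) {rels : Set F}
    (hker : (p.comp φ).ker = Subgroup.normalClosure rels)
    (hcenter : φ '' rels ⊆ Subgroup.center E) :
    ∃ s : G → E, (∀ x, p (s x) = x) ∧
      ∀ x y, s x * s y * (s (x * y))⁻¹ ∈ Subgroup.closure (φ '' rels) := by
  choose σ hσ using hsurj
  refine ⟨φ ∘ σ, hσ, fun x y ↦ ?_⟩
  have hmem : σ x * σ y * (σ (x * y))⁻¹ ∈ (p.comp φ).ker := by
    rw [MonoidHom.mem_ker, map_mul, map_mul, map_inv, hσ, hσ, hσ, mul_inv_cancel]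
  rw [hker] at hmem
  simpa only [Function.comp_apply, map_mul, map_inv] using
    map_normalClosure_le_closure_image hcenter (Subgroup.mem_map_of_mem φ hmem)

theorem exists_section_mul_mul_inv_mem_closure_finite {p : E →* G} (hp : Function.Surjective p)
    (hcentral : p.ker ≤ Subgroup.center E) {α : Type*} {rels : Set (FreeGroup α)}
    (hrels : rels.Finite) (e : G ≃* PresentedGroup rels) :
    ∃ (S : Set E) (s : G → E), S.Finite ∧ S ⊆ p.ker ∧ (∀ x, p (s x) = x) ∧
      ∀ x y, s x * s y * (s (x * y))⁻¹ ∈ Subgroup.closure S := by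
  let π : FreeGroup α →* G := (e.symm : PresentedGroup rels →* G).comp (PresentedGroup.mk rels)
  have hπ : Function.Surjective π := e.symm.surjective.comp (PresentedGroup.mk_surjective rels)
  have hker : π.ker = Subgroup.normalClosure rels := by
    ext r
    rw [MonoidHom.ker_mulEquiv_comp, MonoidHom.mem_ker, PresentedGroup.mk_eq_one_iff]
  let φ : FreeGroup α →* E := FreeGroup.lift fun i ↦ Function.surjInv hp (π (.of i))
  have hφ : p.comp φ = π := by
    ext i
    simp [φ, Function.surjInv_eq hp]
  have hS : φ '' rels ⊆ p.ker := by
    rintro _ ⟨r, hr, rfl⟩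
    have hr : r ∈ (p.comp φ).ker := by
      rw [hφ, hker]
      exact Subgroup.subset_normalClosure hr
    exact hr
  obtain ⟨s, hs, hmem⟩ := exists_section_mul_mul_inv_mem_closure (hφ ▸ hπ) (hφ ▸ hker)
    (hS.trans hcentral)
  exact ⟨φ '' rels, s, hrels.image φ, hS, hs, hmem⟩

end CentralExtensions

section Cocycles

variable {G M : Type*} [Group G] [AddCommGroup M]

/-- Inhomogeneous `2`-cocycles of `G` with values in `M`, for the trivial action of `G` on `M`. No
normalization is required. -/
def IsTwoCocycle (c : G → G → M) : Prop :=
  ∀ x y z, c x y + c (x * y) z = c y z + c x (y * z)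

variable {c : G → G → M}

theorem IsTwoCocycle.one_left (hc : IsTwoCocycle c) (x : G) : c 1 x = c 1 1 := by
  simpa using (hc 1 1 x).symm

theorem IsTwoCocycle.one_right (hc : IsTwoCocycle c) (x : G) : c x 1 = c 1 1 := by
  simpa using hc x 1 1

/-- The central extension of `G` by `M` classified by a `2`-cocycle: the set `M × G` with the
multiplication twisted by the cocycle. As `c` need not be normalized, the neutral element is
`(-c 1 1, 1)`. -/
@[ext]
structure CocycleExtension (hc : IsTwoCocycle c) where
  /-- The component in the kernel `M`. -/
  fiber : M
  /-- The component in the quotient `G`. -/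
  base : G

namespace CocycleExtension

variable {hc : IsTwoCocycle c}

instance : Mul (CocycleExtension hc) :=
  ⟨fun a b ↦ ⟨a.fiber + b.fiber + c a.base b.base, a.base * b.base⟩⟩

instance : One (CocycleExtension hc) := ⟨⟨-c 1 1, 1⟩⟩

instance : Inv (CocycleExtension hc) := ⟨fun a ↦ ⟨-a.fiber - c a.base⁻¹ a.base - c 1 1, a.base⁻¹⟩⟩

@[simp]
theorem fiber_mul (a b : CocycleExtension hc) :
    (a * b).fiber = a.fiber + b.fiber + c a.base b.base := rfl

@[simp]
theorem base_mul (a b : CocycleExtension hc) : (a * b).base = a.base * b.base := rfl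

@[simp]
theorem fiber_one : (1 : CocycleExtension hc).fiber = -c 1 1 := rfl

@[simp]
theorem base_one : (1 : CocycleExtension hc).base = 1 := rfl

@[simp]
theorem fiber_inv (a : CocycleExtension hc) :
    a⁻¹.fiber = -a.fiber - c a.base⁻¹ a.base - c 1 1 := rfl

@[simp]
theorem base_inv (a : CocycleExtension hc) : a⁻¹.base = a.base⁻¹ := rfl

instance : Group (CocycleExtension hc) :=
  Group.ofLeftAxioms
    (fun a b d ↦ by
      ext
      · calc
          a.fiber + b.fiber + c a.base b.base + d.fiber + c (a.base * b.base) d.base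
            = a.fiber + b.fiber + d.fiber + (c a.base b.base + c (a.base * b.base) d.base) := by
              abel
          _ = a.fiber + b.fiber + d.fiber + (c b.base d.base + c a.base (b.base * d.base)) := by
              rw [hc]
          _ = a.fiber + (b.fiber + d.fiber + c b.base d.base) + c a.base (b.base * d.base) := by
              abel
      · exact mul_assoc _ _ _)
    (fun a ↦ by ext <;> simp [hc.one_left])
    (fun a ↦ by
      ext
      · simp only [fiber_mul, fiber_inv, base_inv, fiber_one]
        abel
      · simp)

/-- The projection of the central extension onto `G`. -/
def proj (hc : IsTwoCocycle c) : CocycleExtension hc →* G where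
  toFun := base
  map_one' := rfl
  map_mul' _ _ := rfl

theorem proj_surjective (hc : IsTwoCocycle c) : Function.Surjective (proj hc) :=
  fun x ↦ ⟨⟨0, x⟩, rfl⟩

/-- The inclusion of the central subgroup `M` into the extension. -/
def incl (hc : IsTwoCocycle c) : Multiplicative M →* CocycleExtension hc where
  toFun m := ⟨m.toAdd - c 1 1, 1⟩
  map_one' := by ext <;> simp
  map_mul' _ _ := by
    ext
    · simp only [toAdd_mul, fiber_mul]
      abel
    · simp

@[simp]
theorem fiber_incl (m : Multiplicative M) : (incl hc m).fiber = m.toAdd - c 1 1 := rfl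

@[simp]
theorem base_incl (m : Multiplicative M) : (incl hc m).base = 1 := rfl

theorem incl_injective (hc : IsTwoCocycle c) : Function.Injective (incl hc) := fun _ _ h ↦
  Multiplicative.toAdd.injective (sub_left_injective (congrArg fiber h))

theorem ker_proj_eq_range_incl (hc : IsTwoCocycle c) : (proj hc).ker = (incl hc).range := by
  ext a
  refine ⟨fun ha ↦ ⟨.ofAdd (a.fiber + c 1 1), ?_⟩, ?_⟩
  · ext
    · simp
    · exact ha.symm
  · rintro ⟨m, rfl⟩
    rfl

theorem ker_proj_le_center (hc : IsTwoCocycle c) :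
    (proj hc).ker ≤ Subgroup.center (CocycleExtension hc) := by
  intro a (ha : a.base = 1)
  refine Subgroup.mem_center_iff.2 fun b ↦ ?_
  ext
  · simp only [fiber_mul, ha, hc.one_left, hc.one_right, add_comm b.fiber]
  · simp [ha]

theorem mul_mul_inv_eq_incl {a b d : CocycleExtension hc} (h : d.base = a.base * b.base) :
    a * b * d⁻¹ = incl hc (.ofAdd (a.fiber + b.fiber + c a.base b.base - d.fiber)) := by
  rw [mul_inv_eq_iff_eq_mul]
  ext
  · simp only [fiber_mul, fiber_incl, base_incl, toAdd_ofAdd, hc.one_left]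
    abel
  · simp only [base_mul, base_incl, h, one_mul]

theorem exists_finite_incl_image_eq {S : Set (CocycleExtension hc)} (hS : S.Finite)
    (hker : S ⊆ (proj hc).ker) : ∃ S' : Set (Multiplicative M), S'.Finite ∧ incl hc '' S' = S := by
  rw [ker_proj_eq_range_incl] at hker
  obtain ⟨S', rfl⟩ := Set.subset_range_iff_exists_image_eq.1 hker
  exact ⟨S', hS.of_finite_image (incl_injective hc).injOn, rfl⟩

end CocycleExtension

open CocycleExtension in
theorem IsTwoCocycle.exists_sub_coboundary_mem_closure (hc : IsTwoCocycle c) {α : Type*}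
    {rels : Set (FreeGroup α)} (hrels : rels.Finite) (e : G ≃* PresentedGroup rels) :
    ∃ (S : Set M) (t : G → M), S.Finite ∧
      ∀ x y, c x y - (t x - t (x * y) + t y) ∈ AddSubgroup.closure S := by
  obtain ⟨S, s, hS, hker, hs, hmem⟩ := exists_section_mul_mul_inv_mem_closure_finite
    (proj_surjective hc) (ker_proj_le_center hc) hrels e
  obtain ⟨S, hS', rfl⟩ := exists_finite_incl_image_eq hS hker
  refine ⟨Multiplicative.ofAdd ⁻¹' S, fun x ↦ -(s x).fiber,
    hS'.preimage Multiplicative.ofAdd.injective.injOn, fun x y ↦ ?_⟩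
  have hbase (x : G) : (s x).base = x := hs x
  have hxy := hmem x y
  rw [mul_mul_inv_eq_incl (by simp only [hbase]), ← MonoidHom.map_closure,
    Subgroup.mem_map_iff_mem (incl_injective hc), hbase, hbase] at hxy
  rw [← Subgroup.toAddSubgroup'_closure, show c x y - (-(s x).fiber - -(s (x * y)).fiber +
    -(s y).fiber) = (s x).fiber + (s y).fiber + c x y - (s (x * y)).fiber by abel]
  exact hxy

end Cocycles

section NerveFaces

open ComposableArrows

variable {C : Type*} [Category* C] {X₀ X₁ X₂ X₃ : C} (f : X₀ ⟶ X₁) (g : X₁ ⟶ X₂) (h : X₂ ⟶ X₃)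

theorem nerve_δ₀_mk₃ : (nerve C).δ 0 (mk₃ f g h) = mk₂ g h := rfl

theorem nerve_δ₁_mk₃ : (nerve C).δ 1 (mk₃ f g h) = mk₂ (f ≫ g) h :=
  ext₂ rfl rfl rfl ((Category.id_comp _).trans (Category.comp_id _)).symm
    ((Category.id_comp _).trans (Category.comp_id _)).symm

theorem nerve_δ₂_mk₃ : (nerve C).δ 2 (mk₃ f g h) = mk₂ f (g ≫ h) :=
  ext₂ rfl rfl rfl ((Category.id_comp _).trans (Category.comp_id _)).symm
    ((Category.id_comp _).trans (Category.comp_id _)).symm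

theorem nerve_δ₃_mk₃ : (nerve C).δ 3 (mk₃ f g h) = mk₂ f g :=
  ext₂ rfl rfl rfl ((Category.id_comp _).trans (Category.comp_id _)).symm
    ((Category.id_comp _).trans (Category.comp_id _)).symm

end NerveFaces

section Homology

variable {R : Type u} [Ring R]

theorem homology_finite_of_pOpcycles_comp_eq_d_comp [IsNoetherianRing R] {ι : Type*}
    {c : ComplexShape ι} {K : HomologicalComplex (ModuleCat.{v} R) c} {i j : ι}
    {Q : ModuleCat.{v} R} {q : K.opcycles i ⟶ Q} (hq : q.hom.ker.FG) {T : K.X j ⟶ Q}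
    (hT : K.pOpcycles i ≫ q = K.d i j ≫ T) :
    Module.Finite R (K.homology i) := by
  have hqT : q = K.fromOpcycles i j ≫ T := by
    rw [← cancel_epi (K.pOpcycles i), hT, K.p_fromOpcycles_assoc]
  have hzero : K.homologyι i ≫ q = 0 := by
    rw [hqT, K.homologyι_comp_fromOpcycles_assoc, Limits.zero_comp]
  have hmem (v : K.homology i) : (K.homologyι i).hom v ∈ q.hom.ker :=
    LinearMap.congr_fun (congrArg ModuleCat.Hom.hom hzero) v
  have hinj : Function.Injective (K.homologyι i).hom :=
    (ModuleCat.mono_iff_injective _).1 inferInstance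
  have : IsNoetherian R q.hom.ker := isNoetherian_of_fg_of_noetherian _ hq
  exact .of_injective ((K.homologyι i).hom.codRestrict _ hmem) fun _ _ h ↦
    hinj (congrArg Subtype.val h)

open Simplicial in
theorem alternatingFaceMapComplex_d_apply (X : SimplicialObject (ModuleCat.{v} R)) {n : ℕ}
    (x : (X _⦋n + 1⦌ : ModuleCat R)) :
    ((alternatingFaceMapComplex (ModuleCat R)).obj X).d (n + 1) n x =
      ∑ i : Fin (n + 2), (-1 : ℤ) ^ (i : ℕ) • X.δ i x := by
  have h := congrArg (fun f ↦ ModuleCat.Hom.hom f x) (alternatingFaceMapComplex_obj_d X n)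
  simp only [AlternatingFaceMapComplex.objD, ModuleCat.hom_sum, LinearMap.sum_apply,
    ModuleCat.hom_zsmul, LinearMap.smul_apply] at h
  exact h

variable (R)

/-- The simplicial chain complex of a simplicial set with coefficients in a ring. In contrast to
`SSet.chainComplex` it is built on free modules instead of coproducts, so that a simplex is an
element of the module of chains. -/
noncomputable abbrev simplicialChainComplex (X : SSet.{u}) : ChainComplex (ModuleCat R) ℕ :=
  (alternatingFaceMapComplex (ModuleCat R)).obj
    (((SimplicialObject.whiskering _ _).obj (ModuleCat.free R)).obj X)

open Simplicial in
/-- A simplex, viewed as an element of the basis of the module of simplicial chains. -/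
noncomputable def simplexChain {X : SSet.{u}} {n : ℕ} (x : X _⦋n⦌) :
    (simplicialChainComplex R X).X n :=
  ModuleCat.freeMk x

open Simplicial in
theorem d_simplexChain {X : SSet.{u}} {n : ℕ} (x : X _⦋n + 1⦌) :
    (simplicialChainComplex R X).d (n + 1) n (simplexChain R x) =
      ∑ i : Fin (n + 2), (-1 : ℤ) ^ (i : ℕ) • simplexChain R (X.δ i x) := by
  refine (alternatingFaceMapComplex_d_apply _ _).trans ?_
  refine Finset.sum_congr rfl fun i _ ↦ congrArg ((-1 : ℤ) ^ (i : ℕ) • ·) ?_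
  exact ModuleCat.free_map_apply _ _

end Homology

section NerveChains

open ComposableArrows

variable (R : Type max u v) [Ring R] {C : Type u} [Category.{v} C] {X₀ X₁ X₂ X₃ : C}
  (f : X₀ ⟶ X₁) (g : X₁ ⟶ X₂) (h : X₂ ⟶ X₃)

theorem d_simplexChain_mk₂ :
    (simplicialChainComplex R (nerve C)).d 2 1 (simplexChain R (mk₂ f g)) =
      simplexChain R (mk₁ g) - simplexChain R (mk₁ (f ≫ g)) + simplexChain R (mk₁ f) := by
  refine (d_simplexChain R (X := nerve C) (mk₂ f g)).trans ?_
  rw [Fin.sum_univ_three, nerve.δ₀_mk₂_eq, nerve.δ₁_mk₂_eq, nerve.δ₂_mk₂_eq]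
  simp [sub_eq_add_neg]

theorem d_simplexChain_mk₃ :
    (simplicialChainComplex R (nerve C)).d 3 2 (simplexChain R (mk₃ f g h)) =
      simplexChain R (mk₂ g h) - simplexChain R (mk₂ (f ≫ g) h) +
        simplexChain R (mk₂ f (g ≫ h)) - simplexChain R (mk₂ f g) := by
  refine (d_simplexChain R (X := nerve C) (mk₃ f g h)).trans ?_
  rw [Fin.sum_univ_four, nerve_δ₀_mk₃, nerve_δ₁_mk₃, nerve_δ₂_mk₃, nerve_δ₃_mk₃]
  simp [sub_eq_add_neg, pow_succ]

end NerveChains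

section BarChains

open ComposableArrows

variable (R : Type u) [Ring R] (G : Type u) [Group G]

/-- The simplicial chain complex of the classifying space of `G`. -/
noncomputable abbrev barComplex : ChainComplex (ModuleCat R) ℕ :=
  simplicialChainComplex R (nerve (SingleObj G))

variable {G}

/-- The bar symbol `[x]`. -/
noncomputable def barChain₁ (x : G) : (barComplex R G).X 1 :=
  simplexChain R (X := nerve _) (mk₁ (X₀ := SingleObj.star G) (X₁ := SingleObj.star G) x)

/-- The bar symbol `[x|y]`. The arrows come in the opposite order, since `f ≫ g = g * f` in
`SingleObj G`. -/
noncomputable def barChain₂ (x y : G) : (barComplex R G).X 2 :=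
  simplexChain R (X := nerve _) (mk₂ (X₀ := SingleObj.star G) (X₁ := SingleObj.star G)
    (X₂ := SingleObj.star G) y x)

/-- The bar symbol `[x|y|z]`. -/
noncomputable def barChain₃ (x y z : G) : (barComplex R G).X 3 :=
  simplexChain R (X := nerve _) (mk₃ (X₀ := SingleObj.star G) (X₁ := SingleObj.star G)
    (X₂ := SingleObj.star G) (X₃ := SingleObj.star G) z y x)

theorem d_barChain₂ (x y : G) :
    (barComplex R G).d 2 1 (barChain₂ R x y) =
      barChain₁ R x - barChain₁ R (x * y) + barChain₁ R y :=
  d_simplexChain_mk₂ R (C := SingleObj G) (X₀ := SingleObj.star G) (X₁ := SingleObj.star G)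
    (X₂ := SingleObj.star G) y x

theorem d_barChain₃ (x y z : G) :
    (barComplex R G).d 3 2 (barChain₃ R x y z) =
      barChain₂ R x y - barChain₂ R x (y * z) + barChain₂ R (x * y) z - barChain₂ R y z :=
  d_simplexChain_mk₃ R (C := SingleObj G) (X₀ := SingleObj.star G) (X₁ := SingleObj.star G)
    (X₂ := SingleObj.star G) (X₃ := SingleObj.star G) z y x

theorem barComplex_hom_ext₂ {Q : ModuleCat.{u} R} {f g : (barComplex R G).X 2 ⟶ Q}
    (h : ∀ x y, f (barChain₂ R x y) = g (barChain₂ R x y)) : f = g := by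
  refine ModuleCat.free_hom_ext (X := ComposableArrows (SingleObj G) 2) fun a ↦ ?_
  obtain ⟨_, _, _, y, x, rfl⟩ := mk₂_surjective a
  exact h x y

theorem exists_hom_barChain₁_eq {Q : ModuleCat.{u} R} (t : G → Q) :
    ∃ T : (barComplex R G).X 1 ⟶ Q, ∀ x, T (barChain₁ R x) = t x :=
  ⟨ModuleCat.freeDesc (X := ComposableArrows (SingleObj G) 1) (↾fun a ↦ t (a.map' 0 1 : _ ⟶ _)),
    fun _ ↦ ModuleCat.freeDesc_apply _ _⟩

theorem isTwoCocycle_pOpcycles_barChain₂ :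
    IsTwoCocycle fun x y : G ↦ (barComplex R G).pOpcycles 2 (barChain₂ R x y) := by
  intro x y z
  have hzero : (barComplex R G).pOpcycles 2 ((barComplex R G).d 3 2 (barChain₃ R x y z)) = 0 := by
    rw [← ModuleCat.comp_apply, HomologicalComplex.d_pOpcycles]
    rfl
  rw [d_barChain₃, map_sub, map_add, map_sub, sub_eq_zero, sub_add_eq_add_sub, sub_eq_iff_eq_add]
    at hzero
  exact hzero

end BarChains

theorem stmt_13_general {R : Type u} [Ring R] [IsNoetherianRing R] {G : Type u} [Group G]
    {α : Type*} {rels : Set (FreeGroup α)} (hrels : rels.Finite) (e : G ≃* PresentedGroup rels) :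
    Module.Finite R ((barComplex R G).homology 2) := by
  obtain ⟨S, t, hS, hmem⟩ :=
    (isTwoCocycle_pOpcycles_barChain₂ R).exists_sub_coboundary_mem_closure hrels e
  let N := Submodule.span R S
  let q : (barComplex R G).opcycles 2 ⟶ ModuleCat.of R (_ ⧸ N) := ModuleCat.ofHom N.mkQ
  have hq : q.hom.ker.FG := by
    rw [show q.hom.ker = N from N.ker_mkQ]
    exact Submodule.fg_span hS
  obtain ⟨T, hT⟩ := exists_hom_barChain₁_eq R (q ∘ t)
  refine homology_finite_of_pOpcycles_comp_eq_d_comp hq (T := T) (barComplex_hom_ext₂ R ?_)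
  intro x y
  have hN : AddSubgroup.closure S ≤ N.toAddSubgroup :=
    (AddSubgroup.closure_le _).2 Submodule.subset_span
  have hqxy := (Submodule.Quotient.eq N).2 (hN (hmem x y))
  rw [ModuleCat.comp_apply, ModuleCat.comp_apply, d_barChain₂, map_add, map_sub, hT, hT, hT]
  exact hqxy

/-- A finitely presented group has finitely generated second integral homology. -/
theorem stmt_13 (G : Type) [Group G] (hG : IsFinitelyPresentedGroup G) :
    AddGroup.FG (groupHomologyZ 2 G) := by
  obtain ⟨n, rels, hrels, ⟨e⟩⟩ := hG
  have hmodule : AddCommGroup.toIntModule _ = (groupHomologyZ 2 G).isModule := Subsingleton.elim _ _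
  rw [← Module.Finite.iff_addGroup_fg, hmodule]
  exact stmt_13_general hrels e
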